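/- arXiv:2407.04962 — 2 statements merged into one kernel-verified Lean document; each statement's English description precedes it below -/
import Mathlib

section
/- Let (Ω, μ) be a probability space, T : Ω → Ω an ergodic measure-preserving transformation, and {J_ω} the associated ergodic family of Jacobi operators with almost-sure spectrum Σ, Lyapunov exponent L, and A = lim_{n→∞}(a_1(ω)⋯a_n(ω))^{1/n} for μ-a.e. ω. Then the Lebesgue measure of the spectrum satisfies |Σ| ≤ 4·A·exp( sup_{E ∈ Σ} |L(E)| ). -/
open MeasureTheory Filter
open scoped ENNReal NNReal

noncomputable section

attribute [local instance] Matrix.normedAddCommGroup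

/-- The Hilbert space `ℓ²(ℕ)` (with complex scalars). -/
abbrev ellTwo : Type := lp (fun _ : ℕ => ℂ) 2

/-- The off-diagonal Jacobi coefficients of the ergodic family generated by the sampling
function `f` and the transformation `T`: `a_n(ω) = f(Tⁿ ω)` for `n ≥ 1`, and `a_0(ω) = 0`. -/
def jacobiA {Ω : Type*} (f : Ω → ℝ) (T : Ω → Ω) : ℕ → Ω → ℝ
  | 0, _ => 0
  | n + 1, ω => f (T^[n + 1] ω)

/-- The diagonal Jacobi coefficients of the ergodic family generated by the sampling
function `g` and the transformation `T`: `b_n(ω) = g(Tⁿ ω)` for `n ≥ 1`. -/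
def jacobiB {Ω : Type*} (g : Ω → ℝ) (T : Ω → Ω) (n : ℕ) (ω : Ω) : ℝ := g (T^[n] ω)

/-- `IsJacobiOp a b J` says that the bounded operator `J` on `ℓ²(ℕ)` acts as the Jacobi
matrix with off-diagonal coefficients `a` and diagonal coefficients `b`:
`(J ψ)_n = a_{n-1} ψ_{n-1} + b_n ψ_n + a_n ψ_{n+1}` for `n ≥ 1` (sites are indexed from `1`,
so that the `k`-th coordinate of `ℓ²(ℕ)`, `k = 0, 1, 2, …`, holds `ψ_{k+1}`; the convention
`a_0 = 0` renders the term `a_0 ψ_0` absent). -/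
def IsJacobiOp (a b : ℕ → ℝ) (J : ellTwo →L[ℂ] ellTwo) : Prop :=
  ∀ ψ : ellTwo, ∀ k : ℕ,
    (J ψ) k = (a k : ℂ) * (if k = 0 then 0 else ψ (k - 1)) + (b (k + 1) : ℂ) * ψ k
      + (a (k + 1) : ℂ) * ψ (k + 1)

/-- The one-step transfer matrix of the ergodic Jacobi family at energy `z` and site `n ≥ 1`:
`A_z at site n = (1 / a_n(ω)) · [[z - b_n(ω), -a_{n-1}(ω)], [a_n(ω), 0]]`. -/
def transferMatrix {Ω : Type*} (f g : Ω → ℝ) (T : Ω → Ω) (z : ℂ) (n : ℕ) (ω : Ω) :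
    Matrix (Fin 2) (Fin 2) ℂ :=
  ((jacobiA f T n ω : ℝ) : ℂ)⁻¹ •
    Matrix.of ![![z - (jacobiB g T n ω : ℂ), -((jacobiA f T (n - 1) ω : ℝ) : ℂ)],
                ![((jacobiA f T n ω : ℝ) : ℂ), 0]]

/-- The transfer matrix cocycle `A_z^n(ω) = A_z(T^{n-1}ω) ⋯ A_z(Tω) A_z(ω)`, i.e. the
product of the one-step transfer matrices at sites `n, n-1, …, 1`. -/
def transferCocycle {Ω : Type*} (f g : Ω → ℝ) (T : Ω → Ω) (z : ℂ) (ω : Ω) :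
    ℕ → Matrix (Fin 2) (Fin 2) ℂ
  | 0 => 1
  | n + 1 => transferMatrix f g T z (n + 1) ω * transferCocycle f g T z ω n

/-!
Multiplied by `a_1 ⋯ a_n`, the upper left entry of the cocycle at energy `E` is `p_n(E)`, where
`p_n` is a monic polynomial of degree `n`. Hence for every `c > A · exp (sup_Σ L)` and every
`E ∈ Σ`, almost surely `|p_n(E)| ≤ c ^ n` for all large `n`. By Fubini some single `ω` has this
property for almost every `E ∈ Σ`, and Pólya's inequality `|{|p| ≤ c ^ n}| ≤ 4 c`, valid for every
monic `p` of degree `n ≥ 1`, passes to the limit inferior of these sets by Fatou's lemma.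

For Pólya's inequality, the distribution function `x ↦ |K ∩ (-∞, x]|` of the compact set
`K = {|p| ≤ c ^ n}` is `1`-Lipschitz and maps `K` onto `[0, |K|]`. So `K` contains points at least
as far apart as the Chebyshev nodes rescaled to `[0, |K|]`, and comparing Lagrange's formulas for
the leading coefficients of `p` and of the Chebyshev polynomial bounds `|K|`.
-/

section Polya

open Polynomial

/-- The distribution function `x ↦ |K ∩ (-∞, x]|` of a set of reals, used to spread a compact set
out over the interval `[0, |K|]`. -/
def volumeBelow (K : Set ℝ) (x : ℝ) : ℝ := volume.real (K ∩ Set.Iic x)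

lemma volumeBelow_mono {K : Set ℝ} (hK : volume K ≠ ∞) : Monotone (volumeBelow K) :=
  fun _ _ hxy ↦ measureReal_mono (Set.inter_subset_inter_right _ (Set.Iic_subset_Iic.mpr hxy))
    (measure_ne_top_of_subset Set.inter_subset_left hK)

lemma volumeBelow_le_add {K : Set ℝ} (hK : volume K ≠ ∞) {x y : ℝ} (hxy : x ≤ y) :
    volumeBelow K y ≤ volumeBelow K x + (y - x) := by
  have hsub : K ∩ Set.Iic y ⊆ (K ∩ Set.Iic x) ∪ Set.Ioc x y := fun t ht ↦
    (le_or_gt t x).imp (⟨ht.1, ·⟩) (⟨·, ht.2⟩)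
  calc volumeBelow K y ≤ volume.real ((K ∩ Set.Iic x) ∪ Set.Ioc x y) :=
        measureReal_mono hsub <| measure_union_ne_top
          (measure_ne_top_of_subset Set.inter_subset_left hK) measure_Ioc_lt_top.ne
    _ ≤ volumeBelow K x + volume.real (Set.Ioc x y) := measureReal_union_le _ _
    _ = volumeBelow K x + (y - x) := by rw [Real.volume_real_Ioc_of_le hxy]

lemma lipschitzWith_one_volumeBelow {K : Set ℝ} (hK : volume K ≠ ∞) :
    LipschitzWith 1 (volumeBelow K) := by
  refine .of_le_add fun x y ↦ ?_
  rcases le_total x y with hxy | hyx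
  · exact (volumeBelow_mono hK hxy).trans (le_add_of_nonneg_right dist_nonneg)
  · exact (volumeBelow_le_add hK hyx).trans (by grw [Real.dist_eq, ← le_abs_self])

lemma volumeBelow_eq_zero_of_isLeast {K : Set ℝ} {m : ℝ} (hm : IsLeast K m) :
    volumeBelow K m = 0 := by
  have hsub : K ∩ Set.Iic m ⊆ {m} := fun t ht ↦ le_antisymm ht.2 (hm.2 ht.1)
  rw [volumeBelow, measureReal_def, measure_mono_null hsub Real.volume_singleton,
    ENNReal.toReal_zero]

lemma volumeBelow_eq_volume_of_isGreatest {K : Set ℝ} {m : ℝ} (hm : IsGreatest K m) :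
    volumeBelow K m = volume.real K := by
  rw [volumeBelow, Set.inter_eq_left.mpr (show K ⊆ Set.Iic m from hm.2)]

lemma volumeBelow_eq_of_isGreatest_inter_Iic {K : Set ℝ} {x y : ℝ}
    (hy : IsGreatest (K ∩ Set.Iic x) y) : volumeBelow K y = volumeBelow K x := by
  have hinter : K ∩ Set.Iic y = K ∩ Set.Iic x :=
    Set.Subset.antisymm (fun _ ht ↦ ⟨ht.1, (Set.mem_Iic.mp ht.2).trans hy.1.2⟩)
      fun _ ht ↦ ⟨ht.1, hy.2 ht⟩
  rw [volumeBelow, volumeBelow, hinter]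

lemma surjOn_volumeBelow {K : Set ℝ} (hK : IsCompact K) (hne : K.Nonempty) :
    Set.SurjOn (volumeBelow K) K (Set.Icc 0 (volume.real K)) := by
  obtain ⟨m, hm⟩ := hK.exists_isLeast hne
  obtain ⟨M, hM⟩ := hK.exists_isGreatest hne
  have hcont : Continuous (volumeBelow K) :=
    (lipschitzWith_one_volumeBelow hK.measure_lt_top.ne).continuous
  intro s hs
  rw [← volumeBelow_eq_zero_of_isLeast hm, ← volumeBelow_eq_volume_of_isGreatest hM] at hs
  obtain ⟨x, hx, rfl⟩ := intermediate_value_Icc (hm.2 hM.1) hcont.continuousOn hs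
  obtain ⟨y, hy⟩ := (hK.inter_right isClosed_Iic).exists_isGreatest ⟨m, hm.1, hx.1⟩
  exact ⟨y, hy.1.1, volumeBelow_eq_of_isGreatest_inter_Iic hy⟩

lemma exists_expanding_mapsTo_of_isCompact {K : Set ℝ} (hK : IsCompact K) (hne : K.Nonempty) :
    ∃ x : ℝ → ℝ, Set.MapsTo x (Set.Icc 0 (volume.real K)) K ∧
      ∀ s ∈ Set.Icc 0 (volume.real K), ∀ t ∈ Set.Icc 0 (volume.real K),
        |s - t| ≤ |x s - x t| := by
  have hsurj := surjOn_volumeBelow hK hne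
  refine ⟨Function.invFunOn (volumeBelow K) K, hsurj.mapsTo_invFunOn, fun s hs t ht ↦ ?_⟩
  have hlip := (lipschitzWith_one_volumeBelow hK.measure_lt_top.ne).dist_le_mul
    (Function.invFunOn (volumeBelow K) K s) (Function.invFunOn (volumeBelow K) K t)
  rwa [hsurj.rightInvOn_invFunOn hs, hsurj.rightInvOn_invFunOn ht, NNReal.coe_one, one_mul,
    Real.dist_eq, Real.dist_eq] at hlip

lemma abs_coeff_le_mul_sum_abs_nodalWeight {ι : Type*} [DecidableEq ι] {s : Finset ι} {v : ι → ℝ}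
    (hv : Set.InjOn v s) {P : ℝ[X]} (hdeg : P.degree < s.card) {C : ℝ}
    (hP : ∀ i ∈ s, |P.eval (v i)| ≤ C) :
    |P.coeff (s.card - 1)| ≤ C * ∑ i ∈ s, |Lagrange.nodalWeight s v i| := by
  rw [Lagrange.coeff_eq_sum hv hdeg, Finset.mul_sum]
  refine (Finset.abs_sum_le_sum_abs _ _).trans (Finset.sum_le_sum fun i hi ↦ ?_)
  rw [div_eq_mul_inv, ← Finset.prod_inv_distrib, abs_mul]
  exact mul_le_mul_of_nonneg_right (hP i hi) (abs_nonneg _)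

lemma injOn_of_expanding {ι : Type*} {s : Set ι} {v w : ι → ℝ} (hw : Set.InjOn w s) {r : ℝ}
    (hr : 0 < r) (hvw : ∀ i ∈ s, ∀ j ∈ s, r * |w i - w j| ≤ |v i - v j|) : Set.InjOn v s := by
  intro i hi j hj hij
  have hle := hvw i hi j hj
  rw [hij, sub_self, abs_zero] at hle
  exact hw hi hj (sub_eq_zero.mp (abs_nonpos_iff.mp (nonpos_of_mul_nonpos_right hle hr)))

lemma abs_nodalWeight_le_of_expanding {ι : Type*} [DecidableEq ι] {s : Finset ι} {v w : ι → ℝ}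
    (hw : Set.InjOn w s) {r : ℝ} (hr : 0 < r)
    (hvw : ∀ i ∈ s, ∀ j ∈ s, r * |w i - w j| ≤ |v i - v j|) {i : ι} (hi : i ∈ s) :
    |Lagrange.nodalWeight s v i| ≤ r⁻¹ ^ (s.card - 1) * |Lagrange.nodalWeight s w i| := by
  simp only [Lagrange.nodalWeight, Finset.abs_prod, abs_inv]
  rw [← Finset.card_erase_of_mem hi, ← Finset.prod_const, ← Finset.prod_mul_distrib]
  refine Finset.prod_le_prod (fun j _ ↦ by positivity) fun j hj ↦ ?_
  obtain ⟨hji, hj⟩ := Finset.mem_erase.mp hj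
  have hpos : 0 < |w i - w j| := abs_pos.mpr (sub_ne_zero.mpr fun h ↦ hji (hw hi hj h).symm)
  rw [← mul_inv]
  exact inv_anti₀ (mul_pos hr hpos) (hvw i hi j hj)

lemma abs_nodalWeight_chebyshev_node {n i : ℕ} (hi : i ∈ Finset.range (n + 1)) :
    |Lagrange.nodalWeight (Finset.range (n + 1)) (Chebyshev.node n) i| =
      (Chebyshev.T ℝ n).eval (Chebyshev.node n i) *
        Lagrange.nodalWeight (Finset.range (n + 1)) (Chebyshev.node n) i := by
  have hin : i ≤ n := Finset.mem_range_succ_iff.mp hi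
  have hpos := Chebyshev.zero_lt_prod_node_sub_node hin
  rw [Chebyshev.eval_T_real_node (Finset.mem_Iic.mpr hin), Lagrange.nodalWeight,
    Finset.prod_inv_distrib, abs_inv]
  rcases neg_one_pow_eq_or ℝ i with hsign | hsign <;> rw [hsign] at hpos ⊢
  · rw [abs_of_pos (by linarith), one_mul]
  · rw [abs_of_neg (by linarith), inv_neg, neg_one_mul]

/-- The Chebyshev polynomial `T_n` alternates between `±1` on its nodes with exactly the signs of
the weights, so the sum recovers its leading coefficient. -/
lemma sum_abs_nodalWeight_chebyshev_node (n : ℕ) :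
    ∑ i ∈ Finset.range (n + 1),
      |Lagrange.nodalWeight (Finset.range (n + 1)) (Chebyshev.node n) i| = 2 ^ (n - 1) := by
  have hdeg : (Chebyshev.T ℝ n).degree < (Finset.range (n + 1)).card := by
    rw [Finset.card_range, Chebyshev.degree_T, Int.natAbs_natCast]
    exact_mod_cast n.lt_succ_self
  have hcoeff := Lagrange.coeff_eq_sum (Chebyshev.strictAntiOn_node n).injOn hdeg
  have hlead : (Chebyshev.T ℝ n).coeff n = 2 ^ (n - 1) := by
    simpa [leadingCoeff] using Chebyshev.leadingCoeff_T ℝ n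
  rw [Finset.card_range, Nat.add_sub_cancel, hlead] at hcoeff
  rw [hcoeff]
  refine Finset.sum_congr rfl fun i hi ↦ ?_
  rw [abs_nodalWeight_chebyshev_node hi, Lagrange.nodalWeight, Finset.prod_inv_distrib,
    div_eq_mul_inv]

lemma pow_mul_abs_coeff_le_of_expanding {n : ℕ} {v : ℕ → ℝ} {r : ℝ} (hr : 0 < r)
    (hv : ∀ i ∈ Finset.range (n + 1), ∀ j ∈ Finset.range (n + 1),
      r * |Chebyshev.node n i - Chebyshev.node n j| ≤ |v i - v j|)
    {P : ℝ[X]} (hdeg : P.natDegree ≤ n) {C : ℝ}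
    (hP : ∀ i ∈ Finset.range (n + 1), |P.eval (v i)| ≤ C) :
    r ^ n * |P.coeff n| ≤ 2 ^ (n - 1) * C := by
  have hnode := (Chebyshev.strictAntiOn_node n).injOn
  have hcard : (Finset.range (n + 1)).card - 1 = n := by simp
  have hdeg' : P.degree < (Finset.range (n + 1)).card := by
    rw [Finset.card_range]
    exact (degree_le_of_natDegree_le hdeg).trans_lt (mod_cast n.lt_succ_self)
  have hC : 0 ≤ C := (abs_nonneg _).trans (hP 0 (by simp))
  calc r ^ n * |P.coeff n|
      ≤ r ^ n * (C * ∑ i ∈ Finset.range (n + 1),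
          |Lagrange.nodalWeight (Finset.range (n + 1)) v i|) := by
        gcongr
        simpa only [hcard] using
          abs_coeff_le_mul_sum_abs_nodalWeight (injOn_of_expanding hnode hr hv) hdeg' hP
    _ ≤ r ^ n * (C * ∑ i ∈ Finset.range (n + 1), r⁻¹ ^ n *
          |Lagrange.nodalWeight (Finset.range (n + 1)) (Chebyshev.node n) i|) := by
        gcongr with i hi
        simpa only [hcard] using abs_nodalWeight_le_of_expanding hnode hr hv hi
    _ = 2 ^ (n - 1) * C := by
        rw [← Finset.mul_sum, sum_abs_nodalWeight_chebyshev_node, inv_pow]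
        field_simp

lemma volume_pow_mul_abs_coeff_le {K : Set ℝ} (hK : IsCompact K) (hpos : 0 < volume.real K)
    {P : ℝ[X]} {n : ℕ} (hdeg : P.natDegree ≤ n) {C : ℝ} (hP : ∀ x ∈ K, |P.eval x| ≤ C) :
    (volume.real K / 2) ^ n * |P.coeff n| ≤ 2 ^ (n - 1) * C := by
  have hne : K.Nonempty :=
    nonempty_of_measure_ne_zero (measureReal_ne_zero_iff hK.measure_lt_top.ne |>.mp hpos.ne')
  obtain ⟨x, hxK, hx⟩ := exists_expanding_mapsTo_of_isCompact hK hne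
  let t (i : ℕ) : ℝ := volume.real K / 2 * (1 + Chebyshev.node n i)
  have ht (i : ℕ) : t i ∈ Set.Icc 0 (volume.real K) := by
    have hnode := Chebyshev.node_mem_Icc (n := n) (i := i)
    constructor <;> simp only [t] <;> nlinarith [hnode.1, hnode.2]
  refine pow_mul_abs_coeff_le_of_expanding (v := x ∘ t) (half_pos hpos) (fun i _ j _ ↦ ?_) hdeg
    fun i _ ↦ hP _ (hxK (ht i))
  calc volume.real K / 2 * |Chebyshev.node n i - Chebyshev.node n j| = |t i - t j| := by
        rw [← mul_sub, add_sub_add_left_eq_sub, abs_mul, abs_of_pos (half_pos hpos)]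
    _ ≤ |x (t i) - x (t j)| := hx _ (ht i) _ (ht j)

lemma isCompact_abs_eval_le {P : ℝ[X]} (hP : 0 < P.degree) (C : ℝ) :
    IsCompact {x | |P.eval x| ≤ C} := by
  simpa only [Set.preimage, mem_closedBall_zero_iff, Real.norm_eq_abs] using
    (P.isProperMap_eval hP).isCompact_preimage (isCompact_closedBall 0 C)

/-- Pólya's inequality, up to the factor `2⁻¹ ^ (1 / n)` in its sharp constant. -/
lemma volume_abs_eval_le_pow {P : ℝ[X]} {n : ℕ} (hP : IsMonicOfDegree P n) (hn : n ≠ 0) {c : ℝ}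
    (hc : 0 ≤ c) : volume {x | |P.eval x| ≤ c ^ n} ≤ ENNReal.ofReal (4 * c) := by
  have hdeg : 0 < P.degree := natDegree_pos_iff_degree_pos.mp (hP.natDegree_eq ▸ hn.bot_lt)
  have hK := isCompact_abs_eval_le hdeg (c ^ n)
  set K := {x | |P.eval x| ≤ c ^ n}
  rw [← ofReal_measureReal hK.measure_lt_top.ne]
  refine ENNReal.ofReal_le_ofReal ?_
  rcases measureReal_nonneg.eq_or_lt with hzero | hpos
  · rw [← hzero]
    positivity
  have hcoeff : P.coeff n = 1 := hP.natDegree_eq ▸ hP.monic.coeff_natDegree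
  have hpow : (volume.real K / 2) ^ n ≤ (2 * c) ^ n :=
    calc (volume.real K / 2) ^ n ≤ 2 ^ (n - 1) * c ^ n := by
          simpa only [hcoeff, abs_one, mul_one] using
            volume_pow_mul_abs_coeff_le hK hpos hP.natDegree_eq.le fun _ hx ↦ hx
      _ ≤ 2 ^ n * c ^ n := by gcongr <;> simp
      _ = (2 * c) ^ n := (mul_pow _ _ _).symm
  linarith [le_of_pow_le_pow_left₀ hn (by positivity) hpow]

end Polya

section RandomPolynomials

open Polynomial

lemma measure_liminf_le_liminf {α : Type*} [MeasurableSpace α] (μ : Measure α) (s : ℕ → Set α) :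
    μ (liminf s atTop) ≤ liminf (fun n ↦ μ (s n)) atTop := by
  have hmono : Monotone fun N ↦ ⋂ n ≥ N, s n := fun M N hMN ↦
    Set.biInter_subset_biInter_left fun n hn ↦ hMN.trans hn
  rw [liminf_eq_iSup_iInf_of_nat, liminf_eq_iSup_iInf_of_nat]
  simp only [Set.iSup_eq_iUnion, Set.iInf_eq_iInter]
  rw [hmono.measure_iUnion]
  exact iSup_mono fun N ↦ le_iInf₂ fun n hn ↦ measure_mono (Set.biInter_subset_of_mem hn)

lemma setOf_eventually_mem_eq_liminf {α ι : Type*} (s : ι → Set α) (l : Filter ι) :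
    {x | ∀ᶠ i in l, x ∈ s i} = liminf s l :=
  Set.ext fun _ ↦ mem_liminf_iff_eventually_mem.symm

lemma volume_eventually_abs_eval_le_pow {p : ℕ → ℝ[X]} (hp : ∀ n, IsMonicOfDegree (p n) n) {c : ℝ}
    (hc : 0 ≤ c) :
    volume {x | ∀ᶠ n in atTop, |(p n).eval x| ≤ c ^ n} ≤ ENNReal.ofReal (4 * c) :=
  calc volume {x | ∀ᶠ n in atTop, |(p n).eval x| ≤ c ^ n}
      = volume (liminf (fun n ↦ {x | |(p n).eval x| ≤ c ^ n}) atTop) :=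
        congrArg volume (setOf_eventually_mem_eq_liminf _ _)
    _ ≤ liminf (fun n ↦ volume {x | |(p n).eval x| ≤ c ^ n}) atTop := measure_liminf_le_liminf _ _
    _ ≤ ENNReal.ofReal (4 * c) :=
        liminf_le_of_frequently_le' <| Eventually.frequently <|
          (eventually_ne_atTop 0).mono fun n hn ↦ volume_abs_eval_le_pow (hp n) hn hc

lemma measurableSet_eventually_abs_le {α : Type*} [MeasurableSpace α] {F : ℕ → α → ℝ}
    (hF : ∀ n, Measurable (F n)) (u : ℕ → ℝ) :
    MeasurableSet {x | ∀ᶠ n in atTop, |F n x| ≤ u n} := by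
  rw [show {x | ∀ᶠ n in atTop, |F n x| ≤ u n} = liminf (fun n ↦ {x | |F n x| ≤ u n}) atTop from
    setOf_eventually_mem_eq_liminf _ _]
  exact .measurableSet_liminf fun n ↦ measurableSet_le (hF n).abs measurable_const

lemma exists_measure_setOf_ae_le {α Ω : Type*} [MeasurableSpace α] [MeasurableSpace Ω]
    (ν : Measure α) [SFinite ν] (μ : Measure Ω) [SFinite μ] [NeZero μ] {B : Set (α × Ω)}
    (hB : MeasurableSet B) :
    ∃ ω, ν {x | ∀ᵐ η ∂μ, (x, η) ∈ B} ≤ ν {x | (x, ω) ∈ B} := by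
  have hG : MeasurableSet {x | ∀ᵐ η ∂μ, (x, η) ∈ B} :=
    measurable_measure_prodMk_left hB.compl (measurableSet_singleton 0)
  have hae : ∀ᵐ x ∂ν.restrict {x | ∀ᵐ η ∂μ, (x, η) ∈ B}, ∀ᵐ η ∂μ, (x, η) ∈ B :=
    ae_restrict_mem hG
  rw [Measure.ae_ae_comm (p := fun x η ↦ (x, η) ∈ B) hB] at hae
  obtain ⟨ω, hω⟩ := hae.exists
  rw [ae_restrict_iff' hG] at hω
  exact ⟨ω, measure_mono_ae hω⟩

lemma volume_ae_eventually_abs_eval_le_pow {Ω : Type*} [MeasurableSpace Ω] (μ : Measure Ω)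
    [SFinite μ] [NeZero μ] {p : ℕ → Ω → ℝ[X]} (hp : ∀ n ω, IsMonicOfDegree (p n ω) n)
    (hmeas : ∀ n, Measurable fun q : ℝ × Ω ↦ (p n q.2).eval q.1) {c : ℝ} (hc : 0 ≤ c) :
    volume {x | ∀ᵐ ω ∂μ, ∀ᶠ n in atTop, |(p n ω).eval x| ≤ c ^ n} ≤ ENNReal.ofReal (4 * c) := by
  obtain ⟨ω, hω⟩ := exists_measure_setOf_ae_le volume μ
    (measurableSet_eventually_abs_le hmeas fun n ↦ c ^ n)
  exact hω.trans (volume_eventually_abs_eval_le_pow (fun n ↦ hp n ω) hc)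

end RandomPolynomials

section OrthogonalPolynomials

open Polynomial

/-- The monic orthogonal polynomials of the Jacobi matrix with off-diagonal coefficients `a` and
diagonal coefficients `b` (indexed from `1`), i.e. the characteristic polynomials of its
truncations. They link the transfer matrices to Pólya's inequality. -/
def monicOrthoPoly (a b : ℕ → ℝ) : ℕ → ℝ[X]
  | 0 => 1
  | 1 => X - C (b 1)
  | n + 2 => (X - C (b (n + 2))) * monicOrthoPoly a b (n + 1)
      - C (a (n + 1) ^ 2) * monicOrthoPoly a b n

lemma isMonicOfDegree_monicOrthoPoly (a b : ℕ → ℝ) :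
    ∀ n, IsMonicOfDegree (monicOrthoPoly a b n) n
  | 0 => isMonicOfDegree_zero_iff.mpr rfl
  | 1 => isMonicOfDegree_X_sub_one _
  | n + 2 => by
    have hn := isMonicOfDegree_monicOrthoPoly a b n
    have hmul : IsMonicOfDegree ((X - C (b (n + 2))) * monicOrthoPoly a b (n + 1)) (n + 2) := by
      simpa only [add_comm 1] using!
        (isMonicOfDegree_X_sub_one _).mul (isMonicOfDegree_monicOrthoPoly a b (n + 1))
    exact hmul.sub <| (natDegree_C_mul_le _ _).trans_lt (by rw [hn.natDegree_eq]; omega)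

lemma measurable_eval_monicOrthoPoly {Ω : Type*} [MeasurableSpace Ω] {a b : ℕ → Ω → ℝ}
    (ha : ∀ n, Measurable (a n)) (hb : ∀ n, Measurable (b n)) :
    ∀ n, Measurable fun q : ℝ × Ω ↦
      (monicOrthoPoly (fun k ↦ a k q.2) (fun k ↦ b k q.2) n).eval q.1
  | 0 => by simp only [monicOrthoPoly, eval_one, measurable_const]
  | 1 => by
    simp only [monicOrthoPoly, eval_sub, eval_X, eval_C]
    fun_prop
  | n + 2 => by
    have h₀ := measurable_eval_monicOrthoPoly ha hb n
    have h₁ := measurable_eval_monicOrthoPoly ha hb (n + 1)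
    simp only [monicOrthoPoly, eval_sub, eval_mul, eval_X, eval_C]
    fun_prop

end OrthogonalPolynomials

section TransferMatrices

open scoped Matrix.Norms.Elementwise

variable {Ω : Type*} {f g : Ω → ℝ} {T : Ω → Ω}

lemma measurable_jacobiA [MeasurableSpace Ω] (hf : Measurable f) (hT : Measurable T) :
    ∀ n, Measurable (jacobiA f T n)
  | 0 => measurable_const
  | n + 1 => hf.comp (hT.iterate (n + 1))

lemma measurable_jacobiB [MeasurableSpace Ω] (hg : Measurable g) (hT : Measurable T) (n : ℕ) :
    Measurable (jacobiB g T n) :=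
  hg.comp (hT.iterate n)

lemma prod_jacobiA_pos (hf : ∀ ω, 0 < f ω) (n : ℕ) (ω : Ω) :
    0 < ∏ i ∈ Finset.Icc 1 n, jacobiA f T i ω := by
  refine Finset.prod_pos fun i hi ↦ ?_
  obtain ⟨k, rfl⟩ := Nat.exists_eq_add_of_le' (Finset.mem_Icc.mp hi).1
  exact hf _

lemma prod_jacobiA_succ (n : ℕ) (ω : Ω) : ∏ i ∈ Finset.Icc 1 (n + 1), jacobiA f T i ω =
    (∏ i ∈ Finset.Icc 1 n, jacobiA f T i ω) * jacobiA f T (n + 1) ω :=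
  Finset.prod_Icc_succ_top (by omega) _

lemma jacobiA_mul_transferCocycle_succ_zero_zero (z : ℂ) {n : ℕ} {ω : Ω}
    (hn : jacobiA f T (n + 1) ω ≠ 0) :
    (jacobiA f T (n + 1) ω : ℂ) * transferCocycle f g T z ω (n + 1) 0 0 =
      (z - jacobiB g T (n + 1) ω) * transferCocycle f g T z ω n 0 0 -
        jacobiA f T n ω * transferCocycle f g T z ω n 1 0 := by
  have hn' : (jacobiA f T (n + 1) ω : ℂ) ≠ 0 := mod_cast hn
  simp only [transferCocycle, transferMatrix, Nat.add_sub_cancel, Matrix.mul_apply,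
    Matrix.smul_apply, Matrix.of_apply, Matrix.cons_val', Matrix.cons_val_fin_one,
    Matrix.cons_val_zero, Matrix.cons_val_one, Fin.sum_univ_two, smul_eq_mul]
  field_simp
  ring

lemma transferCocycle_succ_one_zero (z : ℂ) {n : ℕ} {ω : Ω} (hn : jacobiA f T (n + 1) ω ≠ 0) :
    transferCocycle f g T z ω (n + 1) 1 0 = transferCocycle f g T z ω n 0 0 := by
  simp [transferCocycle, transferMatrix, Matrix.mul_apply, Fin.sum_univ_two, hn]

lemma prod_mul_transferCocycle_zero_zero (hf : ∀ ω, 0 < f ω) (z : ℂ) (ω : Ω) : ∀ n,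
    ((∏ i ∈ Finset.Icc 1 n, jacobiA f T i ω : ℝ) : ℂ) * transferCocycle f g T z ω n 0 0 =
      Polynomial.aeval z (monicOrthoPoly (jacobiA f T · ω) (jacobiB g T · ω) n)
  | 0 => by simp [transferCocycle, monicOrthoPoly]
  | 1 => by
    have h := jacobiA_mul_transferCocycle_succ_zero_zero (g := g) z (n := 0) (hf (T^[1] ω)).ne'
    simpa [transferCocycle, monicOrthoPoly] using h
  | n + 2 => by
    have h₀ := prod_mul_transferCocycle_zero_zero hf z ω n
    have h₁ := prod_mul_transferCocycle_zero_zero hf z ω (n + 1)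
    have hrec := jacobiA_mul_transferCocycle_succ_zero_zero (g := g) z (hf (T^[n + 2] ω)).ne'
    rw [transferCocycle_succ_one_zero z (hf (T^[n + 1] ω)).ne'] at hrec
    simp only [monicOrthoPoly, map_sub, map_mul, Polynomial.aeval_X, Polynomial.aeval_C, ← h₀, ← h₁,
      prod_jacobiA_succ, map_pow, Complex.coe_algebraMap]
    push_cast
    linear_combination (∏ i ∈ Finset.Icc 1 n, (jacobiA f T i ω : ℂ)) * jacobiA f T (n + 1) ω * hrec

lemma abs_eval_monicOrthoPoly_le (hf : ∀ ω, 0 < f ω) (x : ℝ) (ω : Ω) (n : ℕ) :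
    |(monicOrthoPoly (jacobiA f T · ω) (jacobiB g T · ω) n).eval x| ≤
      ‖transferCocycle f g T x ω n‖ * ∏ i ∈ Finset.Icc 1 n, jacobiA f T i ω := by
  have hpos := prod_jacobiA_pos (T := T) hf n ω
  have hnorm := congrArg norm (prod_mul_transferCocycle_zero_zero (g := g) (T := T) hf x ω n)
  rw [← Complex.coe_algebraMap, Polynomial.aeval_algebraMap_apply_eq_algebraMap_eval,
    Complex.coe_algebraMap, norm_mul, Complex.norm_real, Complex.norm_real,
    Real.norm_of_nonneg hpos.le, Real.norm_eq_abs, mul_comm] at hnorm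
  rw [← hnorm]
  gcongr
  exact Matrix.norm_entry_le_entrywise_sup_norm _

lemma norm_transferMatrix_le {ε M : ℝ} (hε : 0 < ε) (hfε : ∀ ω, ε ≤ f ω) (hfM : ∀ ω, |f ω| ≤ M)
    (hgM : ∀ ω, |g ω| ≤ M) (z : ℂ) (n : ℕ) (ω : Ω) :
    ‖transferMatrix f g T z (n + 1) ω‖ ≤ ε⁻¹ * (‖z‖ + M) := by
  have hM : 0 ≤ M := (abs_nonneg _).trans (hgM ω)
  have ha : ∀ k, |jacobiA f T k ω| ≤ M
    | 0 => by simpa [jacobiA] using hM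
    | k + 1 => hfM _
  have hinv : ‖(jacobiA f T (n + 1) ω : ℂ)⁻¹‖ ≤ ε⁻¹ := by
    rw [norm_inv, Complex.norm_real]
    exact inv_anti₀ hε ((hfε _).trans (le_abs_self _))
  rw [transferMatrix, norm_smul]
  refine mul_le_mul hinv ((Matrix.norm_le_iff (by positivity)).mpr fun i j ↦ ?_) (norm_nonneg _)
    (by positivity)
  fin_cases i <;> fin_cases j
  · exact (norm_sub_le _ _).trans (by simpa [jacobiB] using hgM _)
  · simpa using (ha n).trans (le_add_of_nonneg_left (norm_nonneg z))
  · simpa using (ha (n + 1)).trans (le_add_of_nonneg_left (norm_nonneg z))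
  · simpa using add_nonneg (norm_nonneg z) hM

lemma norm_matrix_mul_le_card_mul {l m n R : Type*} [Fintype l] [Fintype m] [Fintype n]
    [NonUnitalSeminormedRing R] (M : Matrix l m R) (N : Matrix m n R) :
    ‖M * N‖ ≤ Fintype.card m * (‖M‖ * ‖N‖) := by
  refine (Matrix.norm_le_iff (by positivity)).mpr fun i j ↦ ?_
  calc ‖(M * N) i j‖ ≤ ∑ _k : m, ‖M‖ * ‖N‖ := norm_sum_le_of_le _ fun k _ ↦
        norm_mul_le_of_le (Matrix.norm_entry_le_entrywise_sup_norm M)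
          (Matrix.norm_entry_le_entrywise_sup_norm N)
    _ = Fintype.card m * (‖M‖ * ‖N‖) := by rw [Finset.sum_const, nsmul_eq_mul, Finset.card_univ]

lemma norm_transferCocycle_le {ε M : ℝ} (hε : 0 < ε) (hfε : ∀ ω, ε ≤ f ω) (hfM : ∀ ω, |f ω| ≤ M)
    (hgM : ∀ ω, |g ω| ≤ M) (z : ℂ) (ω : Ω) :
    ∀ n, ‖transferCocycle f g T z ω n‖ ≤ (2 * (ε⁻¹ * (‖z‖ + M))) ^ n
  | 0 => (Matrix.norm_le_iff zero_le_one).mpr fun i j ↦ by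
      fin_cases i <;> fin_cases j <;> simp [transferCocycle]
  | n + 1 => by
    have hn := norm_transferCocycle_le hε hfε hfM hgM z ω n
    calc ‖transferCocycle f g T z ω (n + 1)‖
        ≤ 2 * (‖transferMatrix f g T z (n + 1) ω‖ * ‖transferCocycle f g T z ω n‖) := by
          simpa only [transferCocycle, Fintype.card_fin, Nat.cast_ofNat] using
            norm_matrix_mul_le_card_mul (transferMatrix f g T z (n + 1) ω)
              (transferCocycle f g T z ω n)
      _ ≤ 2 * ((ε⁻¹ * (‖z‖ + M)) * (2 * (ε⁻¹ * (‖z‖ + M))) ^ n) := by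
          have hstep := norm_transferMatrix_le (T := T) hε hfε hfM hgM z n ω
          gcongr
          exact (norm_nonneg _).trans hstep
      _ = (2 * (ε⁻¹ * (‖z‖ + M))) ^ (n + 1) := by ring

end TransferMatrices

section LyapunovExponents

variable {Ω : Type*} {f g : Ω → ℝ} {T : Ω → Ω}

lemma log_div_le_log_of_le_pow {x B : ℝ} {n : ℕ} (hx : 0 ≤ x) (hB : 1 ≤ B) (hxB : x ≤ B ^ n) :
    Real.log x / n ≤ Real.log B := by
  refine div_le_of_le_mul₀ n.cast_nonneg (Real.log_nonneg hB) ?_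
  rcases hx.eq_or_lt with rfl | hpos
  · rw [Real.log_zero]
    exact mul_nonneg (Real.log_nonneg hB) n.cast_nonneg
  · calc Real.log x ≤ Real.log (B ^ n) := Real.log_le_log hpos hxB
      _ = Real.log B * n := by rw [Real.log_pow, mul_comm]

lemma lyapunov_le_log {ε M : ℝ} (hε : 0 < ε) (hfε : ∀ ω, ε ≤ f ω) (hfM : ∀ ω, |f ω| ≤ M)
    (hgM : ∀ ω, |g ω| ≤ M) {z : ℂ} {ω : Ω} {l : ℝ}
    (hl : Tendsto (fun n : ℕ ↦ Real.log ‖transferCocycle f g T z ω n‖ / n) atTop (nhds l)) :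
    l ≤ Real.log (2 * (ε⁻¹ * (‖z‖ + M))) := by
  have hεM : ε ≤ ‖z‖ + M :=
    ((hfε ω).trans (le_abs_self _)).trans <| (hfM ω).trans (le_add_of_nonneg_left (norm_nonneg z))
  have hone : 1 ≤ ε⁻¹ * (‖z‖ + M) := by rwa [← div_eq_inv_mul, one_le_div hε]
  exact le_of_tendsto' hl fun n ↦ log_div_le_log_of_le_pow (norm_nonneg _) (by linarith)
    (norm_transferCocycle_le hε hfε hfM hgM z ω n)

lemma bddAbove_abs_lyapunov_image {ε M : ℝ} (hε : 0 < ε) (hfε : ∀ ω, ε ≤ f ω)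
    (hfM : ∀ ω, |f ω| ≤ M) (hgM : ∀ ω, |g ω| ≤ M) {S : Set ℝ} (hS : Bornology.IsBounded S)
    {L : ℝ → ℝ} (hLnn : ∀ E ∈ S, 0 ≤ L E)
    (hL : ∀ E ∈ S, ∃ ω,
      Tendsto (fun n : ℕ ↦ Real.log ‖transferCocycle f g T E ω n‖ / n) atTop (nhds (L E))) :
    BddAbove ((fun E ↦ |L E|) '' S) := by
  obtain ⟨R, hR⟩ := hS.exists_norm_le
  refine ⟨Real.log (2 * (ε⁻¹ * (R + M))), Set.forall_mem_image.mpr fun E hE ↦ ?_⟩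
  obtain ⟨ω, hω⟩ := hL E hE
  have hM : 0 < M := (hε.trans_le (hfε ω)).trans_le ((le_abs_self _).trans (hfM ω))
  calc |L E| = L E := abs_of_nonneg (hLnn E hE)
    _ ≤ Real.log (2 * (ε⁻¹ * (‖(E : ℂ)‖ + M))) := lyapunov_le_log hε hfε hfM hgM hω
    _ ≤ Real.log (2 * (ε⁻¹ * (R + M))) := by
        rw [Complex.norm_real]
        gcongr
        exact hR E hE

lemma eventually_mul_le_pow {u v : ℕ → ℝ} (hv : ∀ n, 0 ≤ v n) {l A c : ℝ}
    (hl : Tendsto (fun n : ℕ ↦ Real.log (u n) / n) atTop (nhds l))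
    (hA : Tendsto (fun n : ℕ ↦ v n ^ (n : ℝ)⁻¹) atTop (nhds A)) (hc : A * Real.exp l < c) :
    ∀ᶠ n in atTop, u n * v n ≤ c ^ n := by
  have hlim := hA.mul (Real.continuous_exp.tendsto l |>.comp hl)
  filter_upwards [hlim.eventually_lt_const hc, eventually_ne_atTop 0] with n hn hn0
  have hroot : 0 ≤ v n ^ (n : ℝ)⁻¹ := Real.rpow_nonneg (hv n) _
  calc u n * v n ≤ Real.exp (Real.log (u n)) * v n := by
        gcongr
        · exact hv n
        · exact Real.le_exp_log _
    _ = (v n ^ (n : ℝ)⁻¹ * Real.exp (Real.log (u n) / n)) ^ n := by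
        rw [mul_pow, Real.rpow_inv_natCast_pow (hv n) hn0, ← Real.exp_nat_mul,
          mul_div_cancel₀ _ (Nat.cast_ne_zero.mpr hn0), mul_comm]
    _ ≤ c ^ n := by
        gcongr
        exact hn.le

lemma eventually_abs_eval_monicOrthoPoly_le_pow (hf : ∀ ω, 0 < f ω) {x : ℝ} {ω : Ω} {l A c : ℝ}
    (hl : Tendsto (fun n : ℕ ↦ Real.log ‖transferCocycle f g T x ω n‖ / n) atTop (nhds l))
    (hA : Tendsto (fun n : ℕ ↦ (∏ i ∈ Finset.Icc 1 n, jacobiA f T i ω) ^ (n : ℝ)⁻¹) atTop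
      (nhds A))
    (hc : A * Real.exp l < c) :
    ∀ᶠ n in atTop, |(monicOrthoPoly (jacobiA f T · ω) (jacobiB g T · ω) n).eval x| ≤ c ^ n :=
  (eventually_mul_le_pow (fun n ↦ (prod_jacobiA_pos hf n ω).le) hl hA hc).mono
    fun n hn ↦ (abs_eval_monicOrthoPoly_le hf x ω n).trans hn

end LyapunovExponents

theorem volume_spectrum_le_general {Ω : Type*} [MeasurableSpace Ω] (μ : Measure Ω) [SFinite μ]
    [NeZero μ] {T : Ω → Ω} (hT : Measurable T) {f g : Ω → ℝ} (hf : Measurable f)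
    (hg : Measurable g) (hfpos : ∀ ω, 0 < f ω) {S : Set ℝ} {L : ℝ → ℝ}
    (hL : ∀ E ∈ S, ∀ᵐ ω ∂μ,
      Tendsto (fun n : ℕ ↦ Real.log ‖transferCocycle f g T E ω n‖ / n) atTop (nhds (L E)))
    {A : ℝ} (hA : ∀ᵐ ω ∂μ,
      Tendsto (fun n : ℕ ↦ (∏ i ∈ Finset.Icc 1 n, jacobiA f T i ω) ^ (n : ℝ)⁻¹) atTop (nhds A))
    {l : ℝ} (hl : ∀ E ∈ S, L E ≤ l) :
    volume S ≤ ENNReal.ofReal (4 * A * Real.exp l) := by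
  have hA0 : 0 ≤ A := by
    obtain ⟨ω, hω⟩ := hA.exists
    exact ge_of_tendsto' hω fun n ↦ Real.rpow_nonneg (prod_jacobiA_pos hfpos n ω).le _
  have hbound : ∀ c > A * Real.exp l, volume S ≤ ENNReal.ofReal (4 * c) := fun c hc ↦ by
    have hc0 : 0 ≤ c := (by positivity : 0 ≤ A * Real.exp l).trans hc.le
    refine (measure_mono fun E hE ↦ ?_).trans <| volume_ae_eventually_abs_eval_le_pow μ
      (fun n ω ↦ isMonicOfDegree_monicOrthoPoly (jacobiA f T · ω) (jacobiB g T · ω) n)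
      (measurable_eval_monicOrthoPoly (measurable_jacobiA hf hT) (measurable_jacobiB hg hT)) hc0
    filter_upwards [hL E hE, hA] with ω hLω hAω
    refine eventually_abs_eval_monicOrthoPoly_le_pow hfpos hLω hAω (lt_of_le_of_lt ?_ hc)
    gcongr
    exact hl E hE
  have hcont : Continuous fun c : ℝ ↦ ENNReal.ofReal (4 * c) :=
    ENNReal.continuous_ofReal.comp (continuous_const_mul 4)
  rw [mul_assoc]
  exact ge_of_tendsto (hcont.continuousWithinAt (s := Set.Ioi (A * Real.exp l)))
    (eventually_mem_nhdsWithin.mono hbound)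

/-- Let `(Ω, μ)` be a probability space, `T : Ω → Ω` an ergodic
measure-preserving transformation, and `{J_ω}` the associated ergodic family of Jacobi
operators with almost-sure spectrum `Σ`, Lyapunov exponent `L`, and
`A = lim_{n→∞} (a_1(ω)⋯a_n(ω))^{1/n}` for `μ`-a.e. `ω`. Then the Lebesgue measure of the
spectrum satisfies `|Σ| ≤ 4·A·exp (sup_{E ∈ Σ} |L E|)`. -/
theorem volume_spectrum_le {Ω : Type*} [MeasurableSpace Ω] (μ : Measure Ω)
    [IsProbabilityMeasure μ] (T : Ω → Ω) (hT : Ergodic T μ)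
    (f g : Ω → ℝ) (hf : Measurable f) (hg : Measurable g)
    (ε : ℝ) (hε : 0 < ε) (hfε : ∀ ω, ε ≤ f ω)
    (M : ℝ) (hfM : ∀ ω, |f ω| ≤ M) (hgM : ∀ ω, |g ω| ≤ M)
    (J : Ω → ellTwo →L[ℂ] ellTwo) (hsa : ∀ ω, IsSelfAdjoint (J ω))
    (hJ : ∀ ω, IsJacobiOp (fun n => jacobiA f T n ω) (fun n => jacobiB g T n ω) (J ω))
    (S : Set ℝ) (hSc : IsCompact S)
    (hS : ∀ᵐ ω ∂μ, spectrum ℝ (J ω) = S)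
    (L : ℂ → ℝ) (hLnn : ∀ z, 0 ≤ L z)
    (hL : ∀ z : ℂ, ∀ᵐ ω ∂μ,
      Tendsto (fun n : ℕ => Real.log ‖transferCocycle f g T z ω n‖ / n) atTop (nhds (L z)))
    (A : ℝ) (hA : 0 < A)
    (hAlim : ∀ᵐ ω ∂μ,
      Tendsto (fun n : ℕ => (∏ i ∈ Finset.Icc 1 n, jacobiA f T i ω) ^ ((n : ℝ)⁻¹)) atTop
        (nhds A)) :
    volume S ≤ ENNReal.ofReal (4 * A * Real.exp (sSup ((fun E : ℝ => |L (E : ℂ)|) '' S))) := by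
  have hbdd := bddAbove_abs_lyapunov_image hε hfε hfM hgM hSc.isBounded (L := fun E ↦ L E)
    (fun E _ ↦ hLnn E) (fun E _ ↦ (hL E).exists)
  exact volume_spectrum_le_general μ hT.measurable hf hg (fun ω ↦ hε.trans_le (hfε ω))
    (L := fun E ↦ L E) (fun E _ ↦ hL E) hAlim
    fun E hE ↦ (le_abs_self _).trans (le_csSup hbdd ⟨E, hE, rfl⟩)
end
end

section
/- Let K ⊂ ℝ be a nonempty compact set. Then Cap(K) ≤ (max K − min K)/4, where Cap denotes logarithmic capacity. -/
open MeasureTheory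
open scoped ENNReal NNReal

/-- The logarithmic energy `I(ν) ∈ (-∞, ∞]` of a measure `ν` on `ℝ`:
`I(ν) = ∬ log(1/|x - y|) dν(y) dν(x)`, realized as the monotone limit (supremum) of the
integrals of the kernel `(x, y) ↦ log (1/|x - y|)` truncated above at level `t`
(the kernel takes the value `+∞` on the diagonal, which is truncated to `t`). -/
noncomputable def logEnergy (ν : Measure ℝ) : EReal :=
  ⨆ t : ℝ, ((∫ x, ∫ y, (if x = y then t else min (Real.log (1 / |x - y|)) t) ∂ν ∂ν : ℝ) : EReal)

/-- The logarithmic capacity of a set `E ⊆ ℝ`: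
`Cap(E) = sup { exp (-I(ν)) : ν a Borel probability measure with compact support ⊆ E }`. -/
noncomputable def logCap (E : Set ℝ) : ℝ≥0∞ :=
  ⨆ ν ∈ {ν : Measure ℝ | IsProbabilityMeasure ν ∧ ∃ K, IsCompact K ∧ K ⊆ E ∧ ν Kᶜ = 0},
    EReal.exp (-(logEnergy ν))

/-!
In the variables `x = cos θ`, `y = cos φ` the logarithmic kernel on `[-1, 1]` has the Chebyshev
expansion `log (1 / (2 |x - y|)) = ∑ (2 / n) Tₙ(x) Tₙ(y)`, whose coefficients are nonnegative, so
formally `I(ν) - log 2 = ∑ (2 / n) (∫ Tₙ dν)² ≥ 0` for every probability measure on `[-1, 1]`.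
The Abel means `∑ (2 rⁿ / n) Tₙ(x) Tₙ(y)` make this rigorous: they converge absolutely, have an
elementary closed form, and lie below a truncation of the kernel up to an error `log r → 0`.
Rescaling `[-1, 1]` to an interval of length `ℓ` replaces `log 2` by `log (4 / ℓ)`.
-/

open Set Filter Topology
open Polynomial.Chebyshev (T)

section ChebyshevKernel

/-- The polynomial in `x` and `y` that at `x = cos θ`, `y = cos φ` takes the value
`|1 - r e^{i(θ + φ)}|² |1 - r e^{i(θ - φ)}|²`. It is arranged as a perturbation of its value
`(2 (x - y))²` at `r = 1`. -/
def diskProduct (r x y : ℝ) : ℝ :=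
  (2 * r * (x - y)) ^ 2 + (1 - r) ^ 2 * ((1 + r) ^ 2 - 4 * r * x * y)

/-- The Abel mean `∑ (2 rⁿ / n) Tₙ(x) Tₙ(y)` of the Chebyshev expansion of `log (1 / (2 |x - y|))`,
in closed form. -/
noncomputable def abelLogKernel (r x y : ℝ) : ℝ :=
  -Real.log (diskProduct r x y) / 2

variable {r x y : ℝ}

lemma norm_one_sub_mul_exp_sq (r α : ℝ) :
    ‖1 - (r : ℂ) * Complex.exp (α * Complex.I)‖ ^ 2 = 1 - 2 * r * Real.cos α + r ^ 2 := by
  rw [← Complex.normSq_eq_norm_sq, Complex.normSq_apply]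
  simp only [Complex.sub_re, Complex.sub_im, Complex.one_re, Complex.one_im,
    Complex.re_ofReal_mul, Complex.im_ofReal_mul, Complex.exp_ofReal_mul_I_re,
    Complex.exp_ofReal_mul_I_im]
  linear_combination r ^ 2 * Real.sin_sq_add_cos_sq α

lemma one_sub_two_mul_cos_add_sq_pos (hr : |r| < 1) (α : ℝ) :
    0 < 1 - 2 * r * Real.cos α + r ^ 2 := by
  have hnorm : ‖(r : ℂ) * Complex.exp (α * Complex.I)‖ < 1 := by
    simpa [Complex.norm_exp_ofReal_mul_I] using hr
  have hne : 1 - (r : ℂ) * Complex.exp (α * Complex.I) ≠ 0 := fun h => by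
    rw [← sub_eq_zero.mp h, norm_one] at hnorm
    exact lt_irrefl _ hnorm
  rw [← norm_one_sub_mul_exp_sq]
  positivity

lemma hasSum_pow_div_mul_cos (hr : |r| < 1) (α : ℝ) :
    HasSum (fun n : ℕ => r ^ n / n * Real.cos (n * α))
      (-Real.log (1 - 2 * r * Real.cos α + r ^ 2) / 2) := by
  have hnorm : ‖(r : ℂ) * Complex.exp (α * Complex.I)‖ < 1 := by
    simpa [Complex.norm_exp_ofReal_mul_I] using hr
  convert Complex.hasSum_re (Complex.hasSum_taylorSeries_neg_log hnorm) using 1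
  · funext n
    have hterm : ((r : ℂ) * Complex.exp (α * Complex.I)) ^ n / n =
        ((r ^ n / n : ℝ) : ℂ) * Complex.exp ((n * α : ℝ) * Complex.I) := by
      rw [mul_pow, ← Complex.exp_nat_mul]
      push_cast
      ring_nf
    rw [hterm, Complex.re_ofReal_mul, Complex.exp_ofReal_mul_I_re]
  · rw [Complex.neg_re, Complex.log_re, ← norm_one_sub_mul_exp_sq, Real.log_pow]
    push_cast
    ring

lemma diskProduct_cos_cos (r θ φ : ℝ) :
    diskProduct r (Real.cos θ) (Real.cos φ) =
      (1 - 2 * r * Real.cos (θ + φ) + r ^ 2) * (1 - 2 * r * Real.cos (θ - φ) + r ^ 2) := by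
  rw [diskProduct, Real.cos_add, Real.cos_sub]
  linear_combination
    4 * r ^ 2 * (Real.sin φ ^ 2 * Real.sin_sq θ + (1 - Real.cos θ ^ 2) * Real.sin_sq φ)

lemma hasSum_abelLogKernel (hr : |r| < 1) (hx : x ∈ Icc (-1) 1) (hy : y ∈ Icc (-1) 1) :
    HasSum (fun n : ℕ => 2 * (r ^ n / n) * ((T ℝ n).eval x * (T ℝ n).eval y))
      (abelLogKernel r x y) := by
  obtain ⟨θ, rfl⟩ : ∃ θ, Real.cos θ = x := ⟨_, Real.cos_arccos hx.1 hx.2⟩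
  obtain ⟨φ, rfl⟩ : ∃ φ, Real.cos φ = y := ⟨_, Real.cos_arccos hy.1 hy.2⟩
  convert (hasSum_pow_div_mul_cos hr (θ + φ)).add (hasSum_pow_div_mul_cos hr (θ - φ)) using 1
  · funext n
    rw [Polynomial.Chebyshev.T_real_cos, Polynomial.Chebyshev.T_real_cos, Int.cast_natCast,
      mul_add, mul_sub, Real.cos_add, Real.cos_sub]
    ring
  · rw [abelLogKernel, diskProduct_cos_cos,
      Real.log_mul (one_sub_two_mul_cos_add_sq_pos hr _).ne'
        (one_sub_two_mul_cos_add_sq_pos hr _).ne']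
    ring

lemma sq_add_one_sub_pow_four_le_diskProduct (hr : 0 ≤ r) (hxy : x * y ≤ 1) :
    (2 * r * (x - y)) ^ 2 + (1 - r) ^ 4 ≤ diskProduct r x y := by
  have hfactor : (1 - r) ^ 2 ≤ (1 + r) ^ 2 - 4 * r * x * y := by nlinarith
  calc (2 * r * (x - y)) ^ 2 + (1 - r) ^ 4
      = (2 * r * (x - y)) ^ 2 + (1 - r) ^ 2 * (1 - r) ^ 2 := by ring
    _ ≤ diskProduct r x y := by unfold diskProduct; gcongr

lemma diskProduct_pos (hr₀ : 0 ≤ r) (hr₁ : r < 1) (hxy : x * y ≤ 1) : 0 < diskProduct r x y := by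
  have : 0 < 1 - r := sub_pos.mpr hr₁
  exact lt_of_lt_of_le (by positivity) (sq_add_one_sub_pow_four_le_diskProduct hr₀ hxy)

lemma mul_le_one_of_mem_Icc (hx : x ∈ Icc (-1) 1) (hy : y ∈ Icc (-1) 1) : x * y ≤ 1 := by
  nlinarith [hx.1, hx.2, hy.1, hy.2]

lemma continuousOn_abelLogKernel (hr₀ : 0 ≤ r) (hr₁ : r < 1) :
    ContinuousOn (fun p : ℝ × ℝ => abelLogKernel r p.1 p.2) (Icc (-1) 1 ×ˢ Icc (-1) 1) := by
  have hcont : Continuous fun p : ℝ × ℝ => diskProduct r p.1 p.2 := by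
    unfold diskProduct
    fun_prop
  exact ((hcont.continuousOn.log fun p hp =>
    (diskProduct_pos hr₀ hr₁ (mul_le_one_of_mem_Icc hp.1 hp.2)).ne').neg).div_const 2

end ChebyshevKernel

section ProductIntegrals

lemma integral_prod_nonneg_of_hasSum_mul {Ω ι : Type*} [MeasurableSpace Ω] [Countable ι]
    {μ : Measure Ω} [SFinite μ] {c : ι → ℝ} {g : ι → Ω → ℝ} {k : Ω × Ω → ℝ}
    (hc : ∀ i, 0 ≤ c i) (hg : ∀ i, Integrable (g i) μ)
    (hsum : Summable fun i => c i * (∫ x, ‖g i x‖ ∂μ) ^ 2)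
    (hk : ∀ᵐ p ∂μ.prod μ, HasSum (fun i => c i * (g i p.1 * g i p.2)) (k p)) :
    0 ≤ ∫ p, k p ∂μ.prod μ := by
  have hint (i : ι) : Integrable (fun p : Ω × Ω => c i * (g i p.1 * g i p.2)) (μ.prod μ) :=
    ((hg i).mul_prod (hg i)).const_mul _
  have hnorm (i : ι) : ∫ p : Ω × Ω, ‖c i * (g i p.1 * g i p.2)‖ ∂μ.prod μ =
      c i * (∫ x, ‖g i x‖ ∂μ) ^ 2 := by
    simp_rw [norm_mul, Real.norm_of_nonneg (hc i)]
    rw [integral_const_mul, integral_prod_mul (fun x => ‖g i x‖) (fun x => ‖g i x‖), sq]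
  have htsum := hasSum_integral_of_summable_integral_norm hint (by simpa only [hnorm] using hsum)
  rw [integral_congr_ae (hk.mono fun p hp => hp.tsum_eq)] at htsum
  refine htsum.nonneg fun i => ?_
  rw [integral_const_mul, integral_prod_mul]
  exact mul_nonneg (hc i) (mul_self_nonneg _)

variable {X : Type*} [MeasurableSpace X] {μ : Measure X} {s : Set X}

lemma ae_prod_mem [SFinite μ] (hμ : ∀ᵐ x ∂μ, x ∈ s) :
    ∀ᵐ p ∂μ.prod μ, p ∈ s ×ˢ s :=
  (Measure.quasiMeasurePreserving_fst.ae hμ).and (Measure.quasiMeasurePreserving_snd.ae hμ)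

lemma integrable_prod_of_continuousOn [TopologicalSpace X] [T2Space X]
    [SecondCountableTopology X] [BorelSpace X] [IsFiniteMeasure μ] (hs : IsCompact s)
    (hμ : ∀ᵐ x ∂μ, x ∈ s) {f : X × X → ℝ} (hf : ContinuousOn f (s ×ˢ s)) :
    Integrable f (μ.prod μ) := by
  rw [← Measure.restrict_eq_self_of_ae_mem (ae_prod_mem hμ)]
  exact hf.integrableOn_compact' (hs.prod hs) (hs.prod hs).measurableSet

end ProductIntegrals

lemma integral_abelLogKernel_nonneg {μ : Measure ℝ} [IsFiniteMeasure μ]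
    (hμ : ∀ᵐ x ∂μ, x ∈ Icc (-1) 1) {r : ℝ} (hr₀ : 0 ≤ r) (hr₁ : r < 1) :
    0 ≤ ∫ p, abelLogKernel r p.1 p.2 ∂μ.prod μ := by
  have hbound (n : ℕ) : ∀ᵐ x ∂μ, ‖(T ℝ n).eval x‖ ≤ 1 := hμ.mono fun x hx =>
    Polynomial.Chebyshev.abs_eval_T_real_le_one n (abs_le.mpr hx)
  have hint (n : ℕ) : Integrable (fun x => (T ℝ n).eval x) μ :=
    .of_bound (T ℝ n).continuous.aestronglyMeasurable 1 (hbound n)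
  have hmean (n : ℕ) : ∫ x, ‖(T ℝ n).eval x‖ ∂μ ≤ μ.real univ := by
    simpa using integral_mono_ae (hint n).norm (integrable_const 1) (hbound n)
  have hcoeff (n : ℕ) : r ^ n / n ≤ r ^ n := by
    rcases n.eq_zero_or_pos with rfl | hn
    · simp
    · exact div_le_self (by positivity) (by exact_mod_cast hn)
  refine integral_prod_nonneg_of_hasSum_mul (c := fun n : ℕ => 2 * (r ^ n / n))
    (fun n => by positivity) hint ?_ ?_
  · refine .of_nonneg_of_le (fun n => by positivity) (fun n => ?_)
      (((summable_geometric_of_lt_one hr₀ hr₁).mul_left 2).mul_right (μ.real univ ^ 2))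
    gcongr
    exacts [hcoeff n, hmean n]
  · filter_upwards [ae_prod_mem hμ] with p hp
    exact hasSum_abelLogKernel (abs_lt.mpr ⟨by linarith, hr₁⟩) hp.1 hp.2

section TruncatedEnergy

/-- The kernel `log (1 / |x - y|)` truncated above at level `t`. Truncating inside the logarithm
makes it continuous across the diagonal. -/
noncomputable def truncatedLogKernel (t x y : ℝ) : ℝ :=
  -Real.log (max |x - y| (Real.exp (-t)))

/-- The energy of `ν` for the kernel `log (1 / |x - y|)` truncated above at level `t`. -/
noncomputable def truncatedLogEnergy (ν : Measure ℝ) (t : ℝ) : ℝ :=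
  ∫ p, truncatedLogKernel t p.1 p.2 ∂ν.prod ν

lemma truncatedLogKernel_eq_ite (t x y : ℝ) :
    truncatedLogKernel t x y = if x = y then t else min (Real.log (1 / |x - y|)) t := by
  unfold truncatedLogKernel
  split_ifs with hxy
  · rw [hxy, sub_self, abs_zero, max_eq_right (Real.exp_pos _).le, Real.log_exp, neg_neg]
  · have hpos : 0 < |x - y| := abs_pos.mpr (sub_ne_zero.mpr hxy)
    rw [Real.strictMonoOn_log.monotoneOn.map_max hpos (Real.exp_pos _), Real.log_exp,
      ← min_neg_neg, neg_neg, one_div, Real.log_inv]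

lemma continuous_truncatedLogKernel (t : ℝ) :
    Continuous fun p : ℝ × ℝ => truncatedLogKernel t p.1 p.2 := by
  unfold truncatedLogKernel
  exact ((by fun_prop : Continuous fun p : ℝ × ℝ => max |p.1 - p.2| (Real.exp (-t))).log
    fun p => (lt_max_of_lt_right (Real.exp_pos _)).ne').neg

lemma truncatedLogKernel_affine {c : ℝ} (hc : 0 < c) (d t x y : ℝ) :
    truncatedLogKernel t (c * x + d) (c * y + d) =
      truncatedLogKernel (t + Real.log c) x y - Real.log c := by
  have hmax : max |c * x + d - (c * y + d)| (Real.exp (-t)) =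
      c * max |x - y| (Real.exp (-(t + Real.log c))) := by
    rw [mul_max_of_nonneg _ _ hc.le, add_sub_add_right_eq_sub, ← mul_sub, abs_mul,
      abs_of_pos hc, neg_add, Real.exp_add, Real.exp_neg (Real.log c), Real.exp_log hc,
      mul_left_comm, mul_inv_cancel₀ hc.ne', mul_one]
  have hpos : 0 < max |x - y| (Real.exp (-(t + Real.log c))) :=
    lt_max_of_lt_right (Real.exp_pos _)
  rw [truncatedLogKernel, truncatedLogKernel, hmax, Real.log_mul hc.ne' hpos.ne']
  ring

lemma abelLogKernel_add_log_le_truncatedLogKernel {r x y : ℝ} (hr₀ : 0 < r) (hr₁ : r < 1)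
    (hxy : x * y ≤ 1) :
    abelLogKernel r x y + Real.log (2 * r) ≤
      truncatedLogKernel (-Real.log ((1 - r) ^ 2 / 2)) x y := by
  have hlevel : 0 < (1 - r) ^ 2 / 2 := half_pos (pow_pos (sub_pos.mpr hr₁) 2)
  have hpos : 0 < max |x - y| ((1 - r) ^ 2 / 2) := lt_max_of_lt_right hlevel
  have hsq : (2 * r * max |x - y| ((1 - r) ^ 2 / 2)) ^ 2 ≤ diskProduct r x y := by
    refine le_trans ?_ (sq_add_one_sub_pow_four_le_diskProduct hr₀.le hxy)
    rcases max_choice |x - y| ((1 - r) ^ 2 / 2) with hmax | hmax <;> rw [hmax]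
    · rw [mul_pow, mul_pow _ (x - y), sq_abs]
      exact le_add_of_nonneg_right (by positivity)
    · calc (2 * r * ((1 - r) ^ 2 / 2)) ^ 2 = r ^ 2 * (1 - r) ^ 4 := by ring
        _ ≤ 1 * (1 - r) ^ 4 := by gcongr; exact pow_le_one₀ hr₀.le hr₁.le
        _ = (1 - r) ^ 4 := one_mul _
        _ ≤ (2 * r * (x - y)) ^ 2 + (1 - r) ^ 4 := le_add_of_nonneg_left (sq_nonneg _)
  have hlog := Real.log_le_log (by positivity) hsq
  rw [Real.log_pow, Real.log_mul (by positivity) hpos.ne'] at hlog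
  rw [truncatedLogKernel, abelLogKernel, neg_neg, Real.exp_log hlevel]
  push_cast at hlog
  linarith

variable {ν : Measure ℝ}

lemma integrable_truncatedLogKernel [IsFiniteMeasure ν] {s : Set ℝ} (hs : IsCompact s)
    (hν : ∀ᵐ x ∂ν, x ∈ s) (t : ℝ) :
    Integrable (fun p : ℝ × ℝ => truncatedLogKernel t p.1 p.2) (ν.prod ν) :=
  integrable_prod_of_continuousOn hs hν (continuous_truncatedLogKernel t).continuousOn

lemma truncatedLogEnergy_le_logEnergy [IsFiniteMeasure ν] {s : Set ℝ} (hs : IsCompact s)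
    (hν : ∀ᵐ x ∂ν, x ∈ s) (t : ℝ) : (truncatedLogEnergy ν t : EReal) ≤ logEnergy ν := by
  rw [truncatedLogEnergy, integral_prod _ (integrable_truncatedLogKernel hs hν t)]
  simp_rw [truncatedLogKernel_eq_ite]
  exact le_iSup (fun t : ℝ => ((∫ x, ∫ y,
    (if x = y then t else min (Real.log (1 / |x - y|)) t) ∂ν ∂ν : ℝ) : EReal)) t

lemma truncatedLogEnergy_map_affine [IsProbabilityMeasure ν] {s : Set ℝ} (hs : IsCompact s)
    (hν : ∀ᵐ x ∂ν, x ∈ s) {c : ℝ} (hc : 0 < c) (d t : ℝ) :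
    truncatedLogEnergy (ν.map fun x => c * x + d) t =
      truncatedLogEnergy ν (t + Real.log c) - Real.log c := by
  have hmeas : Measurable fun x : ℝ => c * x + d := by fun_prop
  rw [truncatedLogEnergy, Measure.map_prod_map _ _ hmeas hmeas,
    integral_map (hmeas.prodMap hmeas).aemeasurable
      (continuous_truncatedLogKernel t).aestronglyMeasurable]
  simp only [Prod.map_fst, Prod.map_snd, truncatedLogKernel_affine hc]
  rw [integral_sub (integrable_truncatedLogKernel hs hν _) (integrable_const _), integral_const,
    probReal_univ, one_smul, truncatedLogEnergy]

lemma log_two_mul_le_truncatedLogEnergy [IsProbabilityMeasure ν] (hν : ∀ᵐ x ∂ν, x ∈ Icc (-1) 1)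
    {r : ℝ} (hr₀ : 0 < r) (hr₁ : r < 1) :
    Real.log (2 * r) ≤ truncatedLogEnergy ν (-Real.log ((1 - r) ^ 2 / 2)) := by
  have hint : Integrable (fun p : ℝ × ℝ => abelLogKernel r p.1 p.2) (ν.prod ν) :=
    integrable_prod_of_continuousOn isCompact_Icc hν (continuousOn_abelLogKernel hr₀.le hr₁)
  calc Real.log (2 * r)
      ≤ ∫ p, abelLogKernel r p.1 p.2 ∂ν.prod ν + Real.log (2 * r) :=
        le_add_of_nonneg_left (integral_abelLogKernel_nonneg hν hr₀.le hr₁)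
    _ = ∫ p, (abelLogKernel r p.1 p.2 + Real.log (2 * r)) ∂ν.prod ν := by
        rw [integral_add hint (integrable_const _), integral_const, probReal_univ, one_smul]
    _ ≤ truncatedLogEnergy ν (-Real.log ((1 - r) ^ 2 / 2)) := by
        refine integral_mono_ae (hint.add (integrable_const _))
          (integrable_truncatedLogKernel isCompact_Icc hν _) ?_
        filter_upwards [ae_prod_mem hν] with p hp
        exact abelLogKernel_add_log_le_truncatedLogKernel hr₀ hr₁
          (mul_le_one_of_mem_Icc hp.1 hp.2)

end TruncatedEnergy

section Interval

variable {ν : Measure ℝ} [IsProbabilityMeasure ν] {a b : ℝ}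

lemma log_four_mul_div_le_logEnergy (hab : a < b) (hν : ∀ᵐ x ∂ν, x ∈ Icc a b) {r : ℝ}
    (hr₀ : 0 < r) (hr₁ : r < 1) :
    (Real.log (4 * r / (b - a)) : EReal) ≤ logEnergy ν := by
  have hlen : 0 < b - a := sub_pos.mpr hab
  set c : ℝ := 2 / (b - a) with hc
  set d : ℝ := -(a + b) / (b - a) with hd
  have hc_pos : 0 < c := by positivity
  have hmeas : Measurable fun x : ℝ => c * x + d := by fun_prop
  have hmap : ∀ᵐ y ∂ν.map (fun x => c * x + d), y ∈ Icc (-1) 1 := by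
    refine (ae_map_iff hmeas.aemeasurable measurableSet_Icc).mpr ?_
    filter_upwards [hν] with x hx
    have haff : c * x + d = (2 * x - (a + b)) / (b - a) := by rw [hc, hd]; ring
    rw [haff, le_div_iff₀ hlen, div_le_iff₀ hlen]
    constructor <;> linarith [hx.1, hx.2]
  have : IsProbabilityMeasure (ν.map fun x => c * x + d) :=
    Measure.isProbabilityMeasure_map hmeas.aemeasurable
  have htrunc := log_two_mul_le_truncatedLogEnergy hmap hr₀ hr₁
  rw [truncatedLogEnergy_map_affine isCompact_Icc hν hc_pos, le_sub_iff_add_le,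
    ← Real.log_mul (by positivity) hc_pos.ne'] at htrunc
  have hscale : 4 * r / (b - a) = 2 * r * c := by rw [hc]; ring
  rw [hscale]
  exact (EReal.coe_le_coe htrunc).trans (truncatedLogEnergy_le_logEnergy isCompact_Icc hν _)

lemma exp_neg_logEnergy_le_of_lt (hab : a < b) (hν : ∀ᵐ x ∂ν, x ∈ Icc a b) {r : ℝ}
    (hr₀ : 0 < r) (hr₁ : r < 1) :
    EReal.exp (-logEnergy ν) ≤ ENNReal.ofReal ((b - a) / (4 * r)) := by
  have hscale : 0 < 4 * r / (b - a) := div_pos (by positivity) (sub_pos.mpr hab)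
  calc EReal.exp (-logEnergy ν)
      ≤ EReal.exp (-(Real.log (4 * r / (b - a)) : EReal)) :=
        EReal.exp_monotone
          (EReal.neg_le_neg_iff.mpr (log_four_mul_div_le_logEnergy hab hν hr₀ hr₁))
    _ = ENNReal.ofReal ((b - a) / (4 * r)) := by
        rw [← EReal.coe_neg, EReal.exp_coe, ← Real.log_inv,
          Real.exp_log (inv_pos.mpr hscale), inv_div]

lemma exp_neg_logEnergy_le (hν : ∀ᵐ x ∂ν, x ∈ Icc a b) :
    EReal.exp (-logEnergy ν) ≤ ENNReal.ofReal ((b - a) / 4) := by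
  obtain ⟨x, hax, hxb⟩ := hν.exists
  -- Enlarging the interval to `[a, b + ε]` covers the case where `ν` is a point mass.
  have hlim : Tendsto (fun ε : ℝ => ENNReal.ofReal ((b + ε - a) / (4 * (1 - ε)))) (𝓝[>] 0)
      (𝓝 (ENNReal.ofReal ((b - a) / 4))) := by
    have hcont : ContinuousAt (fun ε : ℝ => (b + ε - a) / (4 * (1 - ε))) 0 :=
      ContinuousAt.div (by fun_prop) (by fun_prop) (by norm_num)
    simpa using (ENNReal.tendsto_ofReal hcont.tendsto).mono_left nhdsWithin_le_nhds
  refine ge_of_tendsto hlim ?_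
  filter_upwards [Ioo_mem_nhdsGT zero_lt_one] with ε ⟨hε₀, hε₁⟩
  exact exp_neg_logEnergy_le_of_lt (by linarith)
    (hν.mono fun y hy => Icc_subset_Icc_right (by linarith) hy) (by linarith) (by linarith)

end Interval

theorem logCap_le_diam_div_four_general (E : Set ℝ) : logCap E ≤ Metric.ediam E / 4 := by
  by_cases hE : Bornology.IsBounded E
  · rw [Real.ediam_eq hE, ← ENNReal.ofReal_ofNat 4, ← ENNReal.ofReal_div_of_pos four_pos]
    refine iSup₂_le fun ν ⟨_, S, _, hSE, hνS⟩ => ?_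
    have hν : ∀ᵐ x ∂ν, x ∈ S := hνS
    exact exp_neg_logEnergy_le (hν.mono fun x hx => hE.subset_Icc_sInf_sSup (hSE hx))
  · rw [Metric.ediam_eq_top_iff_unbounded.mpr hE, ENNReal.top_div_of_ne_top ENNReal.ofNat_ne_top]
    exact le_top

/-- For a nonempty compact set `K ⊆ ℝ`,
`Cap(K) ≤ (max K - min K) / 4`. -/
theorem logCap_le_diam_div_four (K : Set ℝ) (hKne : K.Nonempty) (hKc : IsCompact K) :
    logCap K ≤ ENNReal.ofReal ((sSup K - sInf K) / 4) := by
  simpa only [Real.ediam_eq hKc.isBounded, ENNReal.ofReal_div_of_pos four_pos,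
    ENNReal.ofReal_ofNat] using logCap_le_diam_div_four_general K
end
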